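/- Let σ > 0 and T > 0. Assume each X_i is divergence-free and δ-homogeneous of degree one. Let b : [0,T]×ℝ^d → ℝ^m be bounded and continuous with b(t,·) ∈ C¹(ℝ^d, ℝ^m) for each t. Let ρ : [0,T]×ℝ^d → [0,∞) be continuous and bounded, C¹ in t and C² in x on (0,T)×ℝ^d with these derivatives continuous, satisfying ∂_t ρ = σ Δ_G ρ + div_G(b(t,·) ρ(t,·)) pointwise on (0,T)×ℝ^d, and such that ∫_{ℝ^d} ρ(t,x) dx = 1 for every t ∈ [0,T]. Let φ : ℝ^d → ℝ with ‖φ‖_∞ ≤ 1 and suppose there is a family (φ_ε)_{ε ∈ (0,1]} with φ_ε ∈ C²(ℝ^d) bounded, ‖φ − φ_ε‖_∞ ≤ ε, |∇_G φ_ε(x)| ≤ 1 and |Δ_G φ_ε(x)| ≤ 1/ε for all x (such a family is produced by group mollification of any φ with ‖φ‖_{C^{0,1}_G} ≤ 1). Then there is a constant C, depending only on σ, T and the supremum norm of b, such that |∫_{ℝ^d} φ(x) ρ(t,x) dx − ∫_{ℝ^d} φ(x) ρ(s,x) dx| ≤ C |t − s|^{1/2} for all s, t ∈ [0,T]. (This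 gives the Hölder estimate d₀(ρ_t, ρ_s) ≤ C|t−s|^{1/2} in the flat Fortet–Mourier metric.) -/

import Mathlib

open MeasureTheory Set

noncomputable section

/-- Derivative of `f : ℝ^d → ℝ` along the vector field `X` (horizontal derivative `X f`). -/
def vderiv {d : ℕ} (X : (Fin d → ℝ) → (Fin d → ℝ)) (f : (Fin d → ℝ) → ℝ)
    (x : Fin d → ℝ) : ℝ := fderiv ℝ f x (X x)

/-- Squared Euclidean norm of the horizontal gradient `∇_G f`. -/
def hgradSq {d m : ℕ} (X : Fin m → (Fin d → ℝ) → (Fin d → ℝ)) (f : (Fin d → ℝ) → ℝ)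
    (x : Fin d → ℝ) : ℝ := ∑ i, (vderiv (X i) f x) ^ 2

/-- Horizontal Laplacian `Δ_G f = Σ X_i (X_i f)`. -/
def hLap {d m : ℕ} (X : Fin m → (Fin d → ℝ) → (Fin d → ℝ)) (f : (Fin d → ℝ) → ℝ)
    (x : Fin d → ℝ) : ℝ := ∑ i, vderiv (X i) (vderiv (X i) f) x

/-- Horizontal divergence `div_G B = Σ X_i B_i`. -/
def hdiv {d m : ℕ} (X : Fin m → (Fin d → ℝ) → (Fin d → ℝ)) (B : (Fin d → ℝ) → Fin m → ℝ)
    (x : Fin d → ℝ) : ℝ := ∑ i, vderiv (X i) (fun y => B y i) x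

/-- Euclidean divergence `Σ_j ∂_{x_j} X^j` of a vector field on `ℝ^d`. -/
def ediv {d : ℕ} (X : (Fin d → ℝ) → (Fin d → ℝ)) (x : Fin d → ℝ) : ℝ :=
  ∑ j, fderiv ℝ X x (Pi.single j 1) j

/-- Anisotropic dilations `δ_λ x = (λ^{w_1} x_1, …, λ^{w_d} x_d)`. -/
def dil {d : ℕ} (w : Fin d → ℕ) (l : ℝ) (x : Fin d → ℝ) : Fin d → ℝ :=
  fun i => l ^ (w i) * x i

/-- A vector field is `δ`-homogeneous of degree one. -/
def homogOne {d : ℕ} (w : Fin d → ℕ) (X : (Fin d → ℝ) → (Fin d → ℝ)) : Prop :=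
  ∀ l : ℝ, 0 < l → ∀ x, fderiv ℝ (dil w l) x (X x) = l • X (dil w l x)

open Filter Topology

lemma vderiv_contDiff {d : ℕ} {n : ℕ} {X : (Fin d → ℝ) → (Fin d → ℝ)} {f : (Fin d → ℝ) → ℝ}
    (hX : ContDiff ℝ (⊤ : ℕ∞) X) (hf : ContDiff ℝ (n + 1 : ℕ) f) :
    ContDiff ℝ n (vderiv X f) := by
  have h1 : ContDiff ℝ n (fderiv ℝ f) := hf.fderiv_right (by norm_cast)
  have h2 : ContDiff ℝ n X := hX.of_le (by exact_mod_cast le_top)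
  exact h1.clm_apply h2

lemma vderiv_mul' {d : ℕ} {X : (Fin d → ℝ) → (Fin d → ℝ)} {f g : (Fin d → ℝ) → ℝ}
    (hf : Differentiable ℝ f) (hg : Differentiable ℝ g) (x : Fin d → ℝ) :
    vderiv X (fun y => f y * g y) x = f x * vderiv X g x + g x * vderiv X f x := by
  unfold vderiv
  rw [fderiv_fun_mul (hf x) (hg x)]
  simp

lemma vderiv_add' {d : ℕ} {X : (Fin d → ℝ) → (Fin d → ℝ)} {f g : (Fin d → ℝ) → ℝ}
    (hf : Differentiable ℝ f) (hg : Differentiable ℝ g) (x : Fin d → ℝ) :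
    vderiv X (fun y => f y + g y) x = vderiv X f x + vderiv X g x := by
  unfold vderiv
  rw [fderiv_fun_add (hf x) (hg x)]
  simp

lemma vderiv_hcs {d : ℕ} {X : (Fin d → ℝ) → (Fin d → ℝ)} {f : (Fin d → ℝ) → ℝ}
    (hf : HasCompactSupport f) : HasCompactSupport (vderiv X f) := by
  refine (hf.fderiv (𝕜 := ℝ)).mono ?_
  intro x hx
  simp only [Function.mem_support, vderiv] at hx ⊢
  intro h
  apply hx
  rw [h]; simp

lemma vderiv_mul2 {d : ℕ} {X : (Fin d → ℝ) → (Fin d → ℝ)} {f g : (Fin d → ℝ) → ℝ}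
    (hX : ContDiff ℝ (⊤ : ℕ∞) X)
    (hf : ContDiff ℝ 2 f) (hg : ContDiff ℝ 2 g) (x : Fin d → ℝ) :
    vderiv X (vderiv X (fun y => f y * g y)) x =
      f x * vderiv X (vderiv X g) x + 2 * (vderiv X f x * vderiv X g x)
        + g x * vderiv X (vderiv X f) x := by
  have df : Differentiable ℝ f := hf.differentiable (by norm_num)
  have dg : Differentiable ℝ g := hg.differentiable (by norm_num)
  have dXf : Differentiable ℝ (vderiv X f) :=
    (vderiv_contDiff (n := 1) hX (by exact_mod_cast hf)).differentiable (by norm_num)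
  have dXg : Differentiable ℝ (vderiv X g) :=
    (vderiv_contDiff (n := 1) hX (by exact_mod_cast hg)).differentiable (by norm_num)
  have e : vderiv X (fun y => f y * g y) =
      fun y => f y * vderiv X g y + g y * vderiv X f y := by
    ext y; exact vderiv_mul' df dg y
  rw [e, vderiv_add' (df.fun_mul dXg) (dg.fun_mul dXf), vderiv_mul' df dXg, vderiv_mul' dg dXf]
  ring

lemma integral_vderiv_zero {d : ℕ} {X : (Fin d → ℝ) → (Fin d → ℝ)} {f : (Fin d → ℝ) → ℝ}
    (hX : ContDiff ℝ (⊤ : ℕ∞) X) (hdiv : ∀ x, ediv X x = 0)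
    (hf : ContDiff ℝ 1 f) (hc : HasCompactSupport f) :
    ∫ x, vderiv X f x = 0 := by
  have hX1 : ContDiff ℝ 1 X := hX.of_le (by exact_mod_cast le_top)
  have hXj : ∀ j, ContDiff ℝ 1 (fun x => X x j) := fun j => contDiff_pi.1 hX1 j
  have dX : Differentiable ℝ X := hX1.differentiable (by norm_num)
  have df : Differentiable ℝ f := hf.differentiable (by norm_num)
  have cf' : ∀ v, Continuous (fun x => fderiv ℝ f x v) := fun v =>
    (hf.continuous_fderiv (by norm_num)).clm_apply continuous_const
  have cX' : ∀ j, Continuous (fun x => fderiv ℝ (fun y => X y j) x (Pi.single j 1)) := fun j =>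
    ((hXj j).continuous_fderiv (by norm_num)).clm_apply continuous_const
  have hcf' : ∀ v, HasCompactSupport (fun x => fderiv ℝ f x v) := fun v => hc.fderiv_apply ℝ v
  have i1 : ∀ j, Integrable (fun x => X x j * fderiv ℝ f x (Pi.single j 1)) := fun j =>
    ((hXj j).continuous.mul (cf' _)).integrable_of_hasCompactSupport ((hcf' _).mul_left)
  have i2 : ∀ j, Integrable (fun x => fderiv ℝ (fun y => X y j) x (Pi.single j 1) * f x) := fun j =>
    ((cX' j).mul hf.continuous).integrable_of_hasCompactSupport (hc.mul_left)
  have i3 : ∀ j, Integrable (fun x => X x j * f x) := fun j =>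
    ((hXj j).continuous.mul hf.continuous).integrable_of_hasCompactSupport (hc.mul_left)
  have e : ∀ x, vderiv X f x = ∑ j, X x j * fderiv ℝ f x (Pi.single j 1) := by
    intro x
    unfold vderiv
    conv_lhs => rw [← Finset.univ_sum_single (X x)]
    rw [map_sum]
    refine Finset.sum_congr rfl fun j _ => ?_
    have : (Pi.single j (X x j) : Fin d → ℝ) = X x j • Pi.single j 1 := by
      rw [← Pi.single_smul]; simp
    rw [this, map_smul, smul_eq_mul]
  have key : ∀ j, ∫ x, X x j * fderiv ℝ f x (Pi.single j 1) =
      - ∫ x, fderiv ℝ (fun y => X y j) x (Pi.single j 1) * f x := fun j =>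
    integral_mul_fderiv_eq_neg_fderiv_mul_of_integrable (i2 j) (i1 j) (i3 j)
      (fun x _ => (hXj j).differentiable (by norm_num) x) (fun x _ => df x)
  simp_rw [e]
  rw [integral_finsetSum _ (fun j _ => i1 j)]
  simp_rw [key]
  rw [Finset.sum_neg_distrib, ← integral_finsetSum _ (fun j _ => i2 j), neg_eq_zero]
  rw [← integral_zero (Fin d → ℝ) ℝ (μ := volume)]
  congr 1
  ext x
  rw [← Finset.sum_mul]
  have := hdiv x
  unfold ediv at this
  have h2 : ∀ j, fderiv ℝ (fun y => X y j) x (Pi.single j 1) = fderiv ℝ X x (Pi.single j 1) j := by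
    intro j
    rw [fderiv_apply (dX x)]
    simp
  simp_rw [h2, this]
  simp

lemma vderiv_ibp {d : ℕ} {X : (Fin d → ℝ) → (Fin d → ℝ)} {f g : (Fin d → ℝ) → ℝ}
    (hX : ContDiff ℝ (⊤ : ℕ∞) X) (hdiv : ∀ x, ediv X x = 0)
    (hf : ContDiff ℝ 1 f) (hg : ContDiff ℝ 1 g) (hc : HasCompactSupport f) :
    ∫ x, f x * vderiv X g x = - ∫ x, g x * vderiv X f x := by
  have h := integral_vderiv_zero hX hdiv (hf.mul hg) hc.mul_right
  have df : Differentiable ℝ f := hf.differentiable (by norm_num)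
  have dg : Differentiable ℝ g := hg.differentiable (by norm_num)
  have cXf : Continuous (vderiv X f) :=
    (vderiv_contDiff (n := 0) hX (by exact_mod_cast hf)).continuous
  have cXg : Continuous (vderiv X g) :=
    (vderiv_contDiff (n := 0) hX (by exact_mod_cast hg)).continuous
  have e : ∀ x, vderiv X (fun y => f y * g y) x = f x * vderiv X g x + g x * vderiv X f x :=
    vderiv_mul' df dg
  rw [show (∫ x, vderiv X (fun y => f y * g y) x) = ∫ x, (f x * vderiv X g x + g x * vderiv X f x)
    from integral_congr_ae (ae_of_all _ e)] at h
  have i1 : Integrable (fun x => f x * vderiv X g x) :=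
    (hf.continuous.mul cXg).integrable_of_hasCompactSupport hc.mul_right
  have i2 : Integrable (fun x => g x * vderiv X f x) :=
    (hg.continuous.mul cXf).integrable_of_hasCompactSupport (vderiv_hcs hc).mul_left
  rw [integral_add i1 i2] at h
  linarith

/-- weak form of the equation at a fixed time -/
lemma weak_form {d m : ℕ} {X : Fin m → (Fin d → ℝ) → (Fin d → ℝ)}
    (hX : ∀ i, ContDiff ℝ (⊤ : ℕ∞) (X i)) (hdv : ∀ i x, ediv (X i) x = 0) (σ : ℝ)
    {b : (Fin d → ℝ) → Fin m → ℝ} {r ψ : (Fin d → ℝ) → ℝ}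
    (hb : ∀ i, ContDiff ℝ 1 (fun y => b y i)) (hr : ContDiff ℝ 2 r) (hψ : ContDiff ℝ 2 ψ)
    (hc : HasCompactSupport ψ) :
    ∫ x, ψ x * (σ * hLap X r x + hdiv X (fun y i => b y i * r y) x) =
      ∫ x, (σ * hLap X ψ x - ∑ i, b x i * vderiv (X i) ψ x) * r x := by
  have hψ1 : ContDiff ℝ 1 ψ := hψ.of_le (by norm_num)
  have hr1 : ContDiff ℝ 1 r := hr.of_le (by norm_num)
  have hbr : ∀ i, ContDiff ℝ 1 (fun y => b y i * r y) := fun i => (hb i).mul hr1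
  have h1 : ∀ {f : (Fin d → ℝ) → ℝ}, ContDiff ℝ 2 f → ∀ i, ContDiff ℝ 1 (vderiv (X i) f) :=
    fun hf i => by
      have := vderiv_contDiff (n := 1) (hX i) (f := _) (by exact_mod_cast hf)
      exact_mod_cast this
  have h0 : ∀ {f : (Fin d → ℝ) → ℝ}, ContDiff ℝ 1 f → ∀ i, Continuous (vderiv (X i) f) :=
    fun hf i => (vderiv_contDiff (n := 0) (hX i) (by exact_mod_cast hf)).continuous
  have iA : ∀ i, Integrable (fun x => σ * (ψ x * vderiv (X i) (vderiv (X i) r) x)) := fun i =>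
    ((hψ.continuous.mul (h0 (h1 hr i) i)).integrable_of_hasCompactSupport hc.mul_right).const_mul σ
  have iB : ∀ i, Integrable (fun x => ψ x * vderiv (X i) (fun y => b y i * r y) x) := fun i =>
    (hψ.continuous.mul (h0 (hbr i) i)).integrable_of_hasCompactSupport hc.mul_right
  have iC : ∀ i, Integrable (fun x => σ * (r x * vderiv (X i) (vderiv (X i) ψ) x)) := fun i =>
    ((hr.continuous.mul (h0 (h1 hψ i) i)).integrable_of_hasCompactSupport
      (vderiv_hcs (vderiv_hcs hc)).mul_left).const_mul σ
  have iD : ∀ i, Integrable (fun x => (b x i * r x) * vderiv (X i) ψ x) := fun i =>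
    ((hbr i).continuous.mul (h0 hψ1 i)).integrable_of_hasCompactSupport (vderiv_hcs hc).mul_left
  have eL : ∀ x, ψ x * (σ * hLap X r x + hdiv X (fun y i => b y i * r y) x) =
      ∑ i, (σ * (ψ x * vderiv (X i) (vderiv (X i) r) x)
        + ψ x * vderiv (X i) (fun y => b y i * r y) x) := by
    intro x
    unfold hLap hdiv
    rw [Finset.sum_add_distrib, mul_add, Finset.mul_sum, Finset.mul_sum, Finset.mul_sum]
    congr 1
    exact Finset.sum_congr rfl fun i _ => by ring
  have eR : ∀ x, (σ * hLap X ψ x - ∑ i, b x i * vderiv (X i) ψ x) * r x =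
      ∑ i, (σ * (r x * vderiv (X i) (vderiv (X i) ψ) x) - (b x i * r x) * vderiv (X i) ψ x) := by
    intro x
    unfold hLap
    rw [Finset.sum_sub_distrib, sub_mul, Finset.mul_sum, Finset.sum_mul, Finset.sum_mul]
    congr 1 <;> exact Finset.sum_congr rfl fun i _ => by ring
  have iCD : ∀ i, Integrable (fun x => σ * (r x * vderiv (X i) (vderiv (X i) ψ) x)
      - (b x i * r x) * vderiv (X i) ψ x) := fun i => (iC i).sub (iD i)
  simp_rw [eL, eR]
  rw [integral_finsetSum _ (fun i _ => (iA i).fun_add (iB i)),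
    integral_finsetSum _ (fun i _ => iCD i)]
  refine Finset.sum_congr rfl fun i _ => ?_
  rw [integral_add (iA i) (iB i), integral_sub (iC i) (iD i), integral_const_mul,
    integral_const_mul, vderiv_ibp (hX i) (hdv i) hψ1 (hbr i) hc,
    vderiv_ibp (hX i) (hdv i) hψ1 (h1 hr i) hc]
  have := vderiv_ibp (hX i) (hdv i) (h1 hψ i) hr1 (vderiv_hcs hc)
  have e2 : ∫ x, vderiv (X i) r x * vderiv (X i) ψ x = ∫ x, vderiv (X i) ψ x * vderiv (X i) r x := by
    simp_rw [mul_comm]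
  rw [e2, this]
  ring

lemma dil_contDiff {d : ℕ} (w : Fin d → ℕ) (l : ℝ) {n : WithTop ℕ∞} : ContDiff ℝ n (dil w l) := by
  unfold dil
  fun_prop

lemma vderiv_dil {d : ℕ} {w : Fin d → ℕ} {X : (Fin d → ℝ) → (Fin d → ℝ)} (hX : homogOne w X)
    {f : (Fin d → ℝ) → ℝ} (hf : Differentiable ℝ f) {l : ℝ} (hl : 0 < l) (x : Fin d → ℝ) :
    vderiv X (fun y => f (dil w l y)) x = l * vderiv X f (dil w l x) := by
  unfold vderiv
  have := fderiv_comp x (hf (dil w l x)) ((dil_contDiff w l (n := 1)).differentiable (by norm_num) x)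
  rw [show (fun y => f (dil w l y)) = f ∘ dil w l from rfl, this]
  simp [hX l hl x]

lemma vderiv_const_mul {d : ℕ} {X : (Fin d → ℝ) → (Fin d → ℝ)}
    {f : (Fin d → ℝ) → ℝ} (hf : Differentiable ℝ f) (l : ℝ) (x : Fin d → ℝ) :
    vderiv X (fun y => l * f y) x = l * vderiv X f x := by
  unfold vderiv
  rw [fderiv_const_mul (hf x)]
  simp

lemma hcs_dil {d : ℕ} {w : Fin d → ℕ} {f : (Fin d → ℝ) → ℝ} (hf : HasCompactSupport f)
    {l : ℝ} (hl : 0 < l) : HasCompactSupport (fun y => f (dil w l y)) := by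
  have hinv : ∀ {a b : ℝ}, a * b = 1 → Function.LeftInverse (dil w a) (dil w b) := by
    intro a b h x
    ext i
    simp only [dil]
    rw [← mul_assoc, ← mul_pow, h, one_pow, one_mul]
  let e : (Fin d → ℝ) ≃ₜ (Fin d → ℝ) :=
    { toFun := dil w l
      invFun := dil w l⁻¹
      left_inv := hinv (by field_simp)
      right_inv := hinv (by field_simp)
      continuous_toFun := (dil_contDiff w l (n := 0)).continuous
      continuous_invFun := (dil_contDiff w l⁻¹ (n := 0)).continuous }
  exact hf.comp_isClosedEmbedding e.isClosedEmbedding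

/-- cutoff functions -/
lemma exists_cutoff {d m : ℕ} {w : Fin d → ℕ} (hw : ∀ i, 0 < w i)
    {X : Fin m → (Fin d → ℝ) → (Fin d → ℝ)} (hXsm : ∀ i, ContDiff ℝ (⊤ : ℕ∞) (X i))
    (hXhom : ∀ i, homogOne w (X i)) :
    ∃ K : ℝ, 0 ≤ K ∧ ∃ χ : ℝ → (Fin d → ℝ) → ℝ,
      (∀ l, 0 < l → l ≤ 1 → ContDiff ℝ 2 (χ l) ∧ HasCompactSupport (χ l) ∧
        (∀ x, |χ l x| ≤ 1) ∧ (∀ i x, |vderiv (X i) (χ l) x| ≤ K * l) ∧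
        (∀ i x, |vderiv (X i) (vderiv (X i) (χ l)) x| ≤ K * l)) ∧
      ∀ x, Tendsto (fun l => χ l x) (𝓝 0) (𝓝 1) := by
  let B : ContDiffBump (0 : Fin d → ℝ) := ⟨1, 2, by norm_num, by norm_num⟩
  have hB : ContDiff ℝ 2 B := B.contDiff
  have hBc : HasCompactSupport B := B.hasCompactSupport
  have h1 : ∀ i, ContDiff ℝ 1 (vderiv (X i) B) := fun i => by
    have := vderiv_contDiff (n := 1) (hXsm i) (f := B) (by exact_mod_cast hB)
    exact_mod_cast this
  have h0 : ∀ i, Continuous (vderiv (X i) (vderiv (X i) B)) :=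
    fun i => (vderiv_contDiff (n := 0) (hXsm i) (by exact_mod_cast h1 i)).continuous
  choose C1 hC1 using fun i => (h1 i).continuous.bounded_above_of_compact_support (vderiv_hcs hBc)
  choose C2 hC2 using fun i =>
    (h0 i).bounded_above_of_compact_support (vderiv_hcs (vderiv_hcs hBc))
  have hC1' : ∀ i, 0 ≤ C1 i := fun i => (norm_nonneg _).trans (hC1 i 0)
  have hC2' : ∀ i, 0 ≤ C2 i := fun i => (norm_nonneg _).trans (hC2 i 0)
  set K : ℝ := ∑ i, (C1 i + C2 i) with hK
  have hKi : ∀ i, C1 i + C2 i ≤ K := fun i =>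
    Finset.single_le_sum (f := fun i => C1 i + C2 i)
      (fun j _ => add_nonneg (hC1' j) (hC2' j)) (Finset.mem_univ i)
  have hK0 : 0 ≤ K := Finset.sum_nonneg fun j _ => add_nonneg (hC1' j) (hC2' j)
  have e1 : ∀ i l, 0 < l → vderiv (X i) (fun y => B (dil w l y)) =
      fun x => l * vderiv (X i) B (dil w l x) := fun i l hl => by
    ext x
    exact vderiv_dil (hXhom i) (hB.differentiable (by norm_num)) hl x
  refine ⟨K, hK0, fun l y => B (dil w l y), ?_, ?_⟩
  · intro l hl hl1
    refine ⟨hB.comp (dil_contDiff w l), hcs_dil hBc hl, ?_, ?_, ?_⟩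
    · intro x
      rw [abs_of_nonneg B.nonneg]
      exact B.le_one
    · intro i x
      rw [e1 i l hl, abs_mul, abs_of_pos hl, mul_comm]
      refine mul_le_mul_of_nonneg_right ?_ hl.le
      have := hC1 i (dil w l x)
      rw [Real.norm_eq_abs] at this
      linarith [hKi i, hC2' i]
    · intro i x
      have d1 : Differentiable ℝ (vderiv (X i) B) := (h1 i).differentiable (by norm_num)
      have d2 : Differentiable ℝ (fun y => vderiv (X i) B (dil w l y)) :=
        d1.comp ((dil_contDiff w l (n := 1)).differentiable (by norm_num))
      rw [e1 i l hl, vderiv_const_mul d2]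
      rw [vderiv_dil (hXhom i) d1 hl, ← mul_assoc, abs_mul, abs_of_pos (mul_pos hl hl), mul_comm]
      have := hC2 i (dil w l x)
      rw [Real.norm_eq_abs] at this
      have h3 : l * l ≤ l := by nlinarith
      exact mul_le_mul (by linarith [hKi i, hC1' i]) h3 (by positivity) hK0
  · intro x
    have c : Continuous (fun l => B (dil w l x)) := by
      refine hB.continuous.comp ?_
      unfold dil
      fun_prop
    have := c.tendsto 0
    have h2 : B (dil w 0 x) = 1 := by
      have : dil w 0 x = 0 := by
        ext i
        simp [dil, (hw i).ne']
      rw [this]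
      exact B.one_of_mem_closedBall (by simp [B])
    rwa [h2] at this

lemma time_est {d m : ℕ} {X : Fin m → (Fin d → ℝ) → (Fin d → ℝ)}
    (hX : ∀ i, ContDiff ℝ (⊤ : ℕ∞) (X i)) (hdv : ∀ i x, ediv (X i) x = 0) {σ T : ℝ}
    {b : ℝ → (Fin d → ℝ) → Fin m → ℝ} {ρ : ℝ → (Fin d → ℝ) → ℝ} {Mρ : ℝ}
    (hb : ∀ t ∈ Set.Icc (0:ℝ) T, ∀ i, ContDiff ℝ 1 (fun y => b t y i))
    (hρc : ContinuousOn (fun p : ℝ × (Fin d → ℝ) => ρ p.1 p.2) (Set.Icc 0 T ×ˢ Set.univ))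
    (hρ0 : ∀ t x, 0 ≤ ρ t x)
    (hρM : ∀ t ∈ Set.Icc (0:ℝ) T, ∀ x, |ρ t x| ≤ Mρ)
    (hρt : ∀ (x : Fin d → ℝ), ∀ t ∈ Set.Ioo (0:ℝ) T, DifferentiableAt ℝ (fun s => ρ s x) t)
    (hρ2 : ∀ t ∈ Set.Ioo (0:ℝ) T, ContDiff ℝ 2 (ρ t))
    (hρt' : ContinuousOn (fun p : ℝ × (Fin d → ℝ) => deriv (fun s => ρ s p.2) p.1)
          (Set.Ioo 0 T ×ˢ Set.univ))
    (heq : ∀ t ∈ Set.Ioo (0:ℝ) T, ∀ x,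
          deriv (fun s => ρ s x) t
            = σ * hLap X (ρ t) x + hdiv X (fun y i => b t y i * ρ t y) x)
    (hint : ∀ t ∈ Set.Icc (0:ℝ) T, (∫ x : Fin d → ℝ, ρ t x) = 1)
    {ψ : (Fin d → ℝ) → ℝ} (hψ : ContDiff ℝ 2 ψ) (hc : HasCompactSupport ψ) {D : ℝ}
    (hD : ∀ t ∈ Set.Ioo (0:ℝ) T, ∀ x,
      |σ * hLap X ψ x - ∑ i, b t x i * vderiv (X i) ψ x| ≤ D)
    {s t : ℝ} (hs : s ∈ Set.Icc (0:ℝ) T) (ht : t ∈ Set.Icc (0:ℝ) T) (hst : s < t) :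
    |(∫ x, ψ x * ρ t x) - ∫ x, ψ x * ρ s x| ≤ D * (t - s) := by
  have hcx : ∀ t ∈ Set.Icc (0:ℝ) T, Continuous (ρ t) := by
    intro t ht
    have : ContinuousOn (fun x => ρ t x) Set.univ :=
      hρc.comp (f := fun x : Fin d → ℝ => (t, x)) (by fun_prop) (fun x _ => ⟨ht, trivial⟩)
    exact continuousOn_univ.1 this
  have hIψ : Integrable ψ := hψ.continuous.integrable_of_hasCompactSupport hc
  -- continuity in time
  have cont : ContinuousOn (fun t => ∫ x, ψ x * ρ t x) (Set.Icc 0 T) := by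
    refine continuousOn_of_dominated (bound := fun x => ‖ψ x‖ * Mρ) ?_ ?_ (hIψ.norm.mul_const _) ?_
    · intro t ht
      exact (hψ.continuous.mul (hcx t ht)).aestronglyMeasurable
    · intro t ht
      refine ae_of_all _ fun x => ?_
      rw [norm_mul]
      exact mul_le_mul_of_nonneg_left (hρM t ht x) (norm_nonneg _)
    · refine ae_of_all _ fun x => ?_
      refine continuousOn_const.mul ?_
      exact hρc.comp (f := fun t : ℝ => (t, x)) (by fun_prop) (fun t ht => ⟨ht, trivial⟩)
  -- derivative in time
  have hder : ∀ t ∈ Set.Ioo (0:ℝ) T, HasDerivAt (fun t => ∫ x, ψ x * ρ t x)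
      (∫ x, ψ x * deriv (fun s => ρ s x) t) t := by
    intro t ht
    obtain ⟨a, ha0, hat⟩ := exists_between ht.1
    obtain ⟨c, htc, hcT⟩ := exists_between ht.2
    have hsub : Set.Icc a c ⊆ Set.Ioo 0 T := fun u hu => ⟨ha0.trans_le hu.1, hu.2.trans_lt hcT⟩
    have hcomp : IsCompact (Set.Icc a c ×ˢ tsupport ψ) := isCompact_Icc.prod hc
    obtain ⟨M, hM⟩ := hcomp.exists_bound_of_continuousOn
      (hρt'.mono (Set.prod_mono hsub (Set.subset_univ _)))
    refine (hasDerivAt_integral_of_dominated_loc_of_deriv_le (s := Set.Icc a c)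
      (F := fun t x => ψ x * ρ t x) (F' := fun t x => ψ x * deriv (fun s => ρ s x) t)
      (bound := fun x => ‖ψ x‖ * M)
      (Icc_mem_nhds hat htc) ?_ ?_ ?_ ?_ (hIψ.norm.mul_const _) ?_).2
    · filter_upwards [Icc_mem_nhds hat htc] with u hu
      exact (hψ.continuous.mul (hcx u (Set.Ioo_subset_Icc_self (hsub hu)))).aestronglyMeasurable
    · exact (hψ.continuous.mul
        (hcx t (Set.Ioo_subset_Icc_self ht))).integrable_of_hasCompactSupport hc.mul_right
    · have : ContinuousOn (fun x => deriv (fun s => ρ s x) t) Set.univ :=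
        hρt'.comp (f := fun x : Fin d → ℝ => (t, x)) (by fun_prop) (fun x _ => ⟨ht, trivial⟩)
      exact (hψ.continuous.mul (continuousOn_univ.1 this)).aestronglyMeasurable
    · refine ae_of_all _ fun x u hu => ?_
      rw [norm_mul]
      by_cases hx : x ∈ tsupport ψ
      · exact mul_le_mul_of_nonneg_left (hM (u, x) ⟨hu, hx⟩) (norm_nonneg _)
      · simp [image_eq_zero_of_notMem_tsupport hx]
    · refine ae_of_all _ fun x u hu => ?_
      exact (hρt x u (hsub hu)).hasDerivAt.const_mul _
  have hbd : ∀ t ∈ Set.Ioo (0:ℝ) T, |∫ x, ψ x * deriv (fun s => ρ s x) t| ≤ D := by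
    intro t ht
    have ht' := Set.Ioo_subset_Icc_self ht
    simp_rw [heq t ht]
    rw [weak_form hX hdv σ (hb t ht') (hρ2 t ht) hψ hc]
    have hI : Integrable (ρ t) := by
      by_contra h
      have := hint t ht'
      rw [integral_undef h] at this
      norm_num at this
    have := norm_integral_le_of_norm_le (hI.const_mul D)
      (f := fun x => (σ * hLap X ψ x - ∑ i, b t x i * vderiv (X i) ψ x) * ρ t x)
      (ae_of_all _ fun x => by
        rw [norm_mul, Real.norm_eq_abs, Real.norm_eq_abs, abs_of_nonneg (hρ0 t x)]
        exact mul_le_mul_of_nonneg_right (hD t ht x) (hρ0 t x))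
    rwa [integral_const_mul, hint t ht', mul_one, Real.norm_eq_abs] at this
  have hsub : Set.Icc s t ⊆ Set.Icc 0 T := Set.Icc_subset_Icc hs.1 ht.2
  obtain ⟨c, hc', hce⟩ := exists_hasDerivAt_eq_slope (fun t => ∫ x, ψ x * ρ t x)
    (fun t => ∫ x, ψ x * deriv (fun s => ρ s x) t) hst (cont.mono hsub)
    (fun u hu => hder u ⟨hs.1.trans_lt hu.1, hu.2.trans_le ht.2⟩)
  have h := hbd c ⟨hs.1.trans_lt hc'.1, hc'.2.trans_le ht.2⟩
  rw [hce, abs_div, abs_of_pos (sub_pos.2 hst), div_le_iff₀ (sub_pos.2 hst)] at h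
  exact h

lemma psi_bound {d m : ℕ} {X : Fin m → (Fin d → ℝ) → (Fin d → ℝ)}
    (hX : ∀ i, ContDiff ℝ (⊤ : ℕ∞) (X i)) {σ : ℝ} (hσ : 0 < σ) {f g : (Fin d → ℝ) → ℝ}
    {K l M ε B : ℝ} (hl : 0 ≤ l) (hK : 0 ≤ K) (hB : 0 ≤ B)
    (hf : ContDiff ℝ 2 f) (hg : ContDiff ℝ 2 g)
    (hf1 : ∀ x, |f x| ≤ 1) (hfX : ∀ i x, |vderiv (X i) f x| ≤ K * l)
    (hfXX : ∀ i x, |vderiv (X i) (vderiv (X i) f) x| ≤ K * l)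
    (hgM : ∀ x, |g x| ≤ M) (hgX : ∀ x, Real.sqrt (hgradSq X g x) ≤ 1)
    (hgL : ∀ x, |hLap X g x| ≤ 1 / ε) (β : Fin m → ℝ) (hβ : ∀ i, |β i| ≤ B) (x : Fin d → ℝ) :
    |σ * hLap X (fun y => f y * g y) x - ∑ i, β i * vderiv (X i) (fun y => f y * g y) x|
      ≤ (σ * (1 / ε) + m * B) + l * (σ * (m * (2 * K + M * K)) + m * (B * (M * K))) := by
  have hM : 0 ≤ M := (abs_nonneg _).trans (hgM x)
  have hgi : ∀ i, |vderiv (X i) g x| ≤ 1 := by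
    intro i
    have h1 : hgradSq X g x ≤ 1 := by
      have := hgX x
      rwa [Real.sqrt_le_iff, one_pow, and_iff_right zero_le_one] at this
    have h2 : (vderiv (X i) g x) ^ 2 ≤ hgradSq X g x :=
      Finset.single_le_sum (f := fun i => (vderiv (X i) g x) ^ 2)
        (fun j _ => sq_nonneg _) (Finset.mem_univ i)
    exact abs_le_one_iff_mul_self_le_one.2 (by nlinarith)
  have e1 : hLap X (fun y => f y * g y) x = f x * hLap X g x +
      ∑ i, (2 * (vderiv (X i) f x * vderiv (X i) g x) +
        g x * vderiv (X i) (vderiv (X i) f) x) := by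
    unfold hLap
    rw [Finset.mul_sum, ← Finset.sum_add_distrib]
    refine Finset.sum_congr rfl fun i _ => ?_
    rw [vderiv_mul2 (hX i) hf hg]; ring
  have b1 : |hLap X (fun y => f y * g y) x| ≤ 1 / ε + m * (2 * K + M * K) * l := by
    rw [e1]
    refine (abs_add_le _ _).trans (add_le_add ?_ ?_)
    · rw [abs_mul]
      have := mul_le_mul (hf1 x) (hgL x) (abs_nonneg _) zero_le_one
      linarith
    · refine (Finset.abs_sum_le_sum_abs _ _).trans ?_
      have : ∀ i ∈ Finset.univ, |2 * (vderiv (X i) f x * vderiv (X i) g x) +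
        g x * vderiv (X i) (vderiv (X i) f) x| ≤ (2 * K + M * K) * l := by
        intro i _
        refine (abs_add_le _ _).trans ?_
        rw [abs_mul, abs_mul, abs_mul, abs_two]
        have h1 := mul_le_mul (hfX i x) (hgi i) (abs_nonneg _) (by positivity)
        have h2 := mul_le_mul (hgM x) (hfXX i x) (abs_nonneg _) hM
        linarith
      refine (Finset.sum_le_card_nsmul _ _ _ this).trans ?_
      simp [mul_assoc]
  have b2 : |∑ i, β i * vderiv (X i) (fun y => f y * g y) x| ≤ m * (B * (1 + M * K * l)) := by
    refine (Finset.abs_sum_le_sum_abs _ _).trans ?_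
    have : ∀ i ∈ Finset.univ, |β i * vderiv (X i) (fun y => f y * g y) x| ≤
        B * (1 + M * K * l) := by
      intro i _
      rw [abs_mul]
      refine mul_le_mul (hβ i) ?_ (abs_nonneg _) hB
      rw [vderiv_mul' (hf.differentiable (by norm_num)) (hg.differentiable (by norm_num))]
      refine (abs_add_le _ _).trans ?_
      rw [abs_mul, abs_mul]
      have h1 := mul_le_mul (hf1 x) (hgi i) (abs_nonneg _) zero_le_one
      have h2 := mul_le_mul (hgM x) (hfX i x) (abs_nonneg _) hM
      linarith
    refine (Finset.sum_le_card_nsmul _ _ _ this).trans ?_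
    simp
  refine (abs_sub _ _).trans ?_
  rw [abs_mul, abs_of_pos hσ]
  have := mul_le_mul_of_nonneg_left b1 hσ.le
  linarith

/-- Hölder continuity in time of the solution of the Fokker–Planck
equation with respect to the flat (Fortet–Mourier) metric:  there is a constant `C`,
depending only on `σ`, `T` and the sup norm bound `Mb` of the drift (and on the fixed
family of vector fields), such that for every probability solution `ρ`, every `φ` with
`‖φ‖_∞ ≤ 1` admitting a mollified family `(φ_ε)`, and all `s, t ∈ [0,T]`,
`|∫ φ ρ(t) − ∫ φ ρ(s)| ≤ C |t − s|^{1/2}`. -/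
theorem fokkerPlanck_flat_metric_holder {d m : ℕ} (hd : 0 < d) (hm : 0 < m)
    (w : Fin d → ℕ) (hw : ∀ i, 0 < w i)
    (X : Fin m → (Fin d → ℝ) → (Fin d → ℝ)) (hXsm : ∀ i, ContDiff ℝ (⊤ : ℕ∞) (X i))
    (hXdivfree : ∀ i x, ediv (X i) x = 0)
    (hXhom : ∀ i, homogOne w (X i))
    (σ T Mb : ℝ) (hσ : 0 < σ) (hT : 0 < T) :
    ∃ C : ℝ, 0 ≤ C ∧
      ∀ (b : ℝ → (Fin d → ℝ) → Fin m → ℝ) (ρ : ℝ → (Fin d → ℝ) → ℝ) (Mρ : ℝ)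
        (φ : (Fin d → ℝ) → ℝ) (φε : ℝ → (Fin d → ℝ) → ℝ),
        Continuous (fun p : ℝ × (Fin d → ℝ) => b p.1 p.2) →
        (∀ t ∈ Set.Icc (0:ℝ) T, ∀ x i, |b t x i| ≤ Mb) →
        (∀ t ∈ Set.Icc (0:ℝ) T, ∀ i, ContDiff ℝ 1 (fun y => b t y i)) →
        ContinuousOn (fun p : ℝ × (Fin d → ℝ) => ρ p.1 p.2) (Set.Icc 0 T ×ˢ Set.univ) →
        (∀ t x, 0 ≤ ρ t x) →
        (∀ t ∈ Set.Icc (0:ℝ) T, ∀ x, |ρ t x| ≤ Mρ) →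
        (∀ (x : Fin d → ℝ), ∀ t ∈ Set.Ioo (0:ℝ) T, DifferentiableAt ℝ (fun s => ρ s x) t) →
        (∀ t ∈ Set.Ioo (0:ℝ) T, ContDiff ℝ 2 (ρ t)) →
        ContinuousOn (fun p : ℝ × (Fin d → ℝ) => deriv (fun s => ρ s p.2) p.1)
          (Set.Ioo 0 T ×ˢ Set.univ) →
        (∀ i, ContinuousOn (fun p : ℝ × (Fin d → ℝ) => vderiv (X i) (ρ p.1) p.2)
          (Set.Ioo 0 T ×ˢ Set.univ)) →
        (∀ i i', ContinuousOn
          (fun p : ℝ × (Fin d → ℝ) => vderiv (X i) (vderiv (X i') (ρ p.1)) p.2)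
          (Set.Ioo 0 T ×ˢ Set.univ)) →
        (∀ t ∈ Set.Ioo (0:ℝ) T, ∀ x,
          deriv (fun s => ρ s x) t
            = σ * hLap X (ρ t) x + hdiv X (fun y i => b t y i * ρ t y) x) →
        (∀ t ∈ Set.Icc (0:ℝ) T, (∫ x : Fin d → ℝ, ρ t x) = 1) →
        (∀ x, |φ x| ≤ 1) →
        (∀ ε ∈ Set.Ioc (0:ℝ) 1,
          ContDiff ℝ 2 (φε ε) ∧ (∃ Mφ : ℝ, ∀ x, |φε ε x| ≤ Mφ) ∧
          (∀ x, |φ x - φε ε x| ≤ ε) ∧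
          (∀ x, Real.sqrt (hgradSq X (φε ε) x) ≤ 1) ∧
          (∀ x, |hLap X (φε ε) x| ≤ 1 / ε)) →
        ∀ s ∈ Set.Icc (0:ℝ) T, ∀ t ∈ Set.Icc (0:ℝ) T,
          |(∫ x : Fin d → ℝ, φ x * ρ t x) - ∫ x : Fin d → ℝ, φ x * ρ s x|
            ≤ C * |t - s| ^ ((1:ℝ)/2) := by
  have hsqT : 0 ≤ √T := Real.sqrt_nonneg T
  refine ⟨2 + σ * (1 + √T) + m * |Mb| * √T, by positivity, ?_⟩
  intro b ρ Mρ φ φε _ hbM hb hρc hρ0 hρM hρt hρ2 hρt' _ _ heq hint hφ1 hφε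
  have hI : ∀ t ∈ Set.Icc (0:ℝ) T, Integrable (ρ t) := by
    intro t ht
    by_contra h
    have := hint t ht
    rw [integral_undef h] at this
    norm_num at this
  have hφc : Continuous φ := by
    apply continuous_of_uniform_approx_of_continuous
    intro u hu
    obtain ⟨e, he, heu⟩ := Metric.mem_uniformity_dist.1 hu
    have hmem : min (e / 2) 1 ∈ Set.Ioc (0:ℝ) 1 := ⟨by positivity, min_le_right _ _⟩
    obtain ⟨h1, -, h3, -⟩ := hφε _ hmem
    refine ⟨φε (min (e / 2) 1), h1.continuous, fun y => heu ?_⟩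
    rw [Real.dist_eq]
    have := min_le_left (e / 2) 1
    linarith [h3 y]
  have hmain : ∀ s ∈ Set.Icc (0:ℝ) T, ∀ t ∈ Set.Icc (0:ℝ) T, s < t →
      |(∫ x : Fin d → ℝ, φ x * ρ t x) - ∫ x : Fin d → ℝ, φ x * ρ s x|
        ≤ (2 + σ * (1 + √T) + m * |Mb| * √T) * √(t - s) := by
    intro s hs t ht hst
    have hts : 0 < t - s := sub_pos.2 hst
    have htsT : t - s ≤ T := by linarith [hs.1, ht.2]
    have hq : 0 < √(t - s) := Real.sqrt_pos.2 hts
    have hqT : √(t - s) ≤ √T := Real.sqrt_le_sqrt htsT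
    have hqq : √(t - s) * √(t - s) = t - s := Real.mul_self_sqrt hts.le
    obtain ⟨ε, hεdef⟩ : ∃ ε, ε = √(t - s) / (1 + √T) := ⟨_, rfl⟩
    have hε0 : 0 < ε := by rw [hεdef]; positivity
    have hε1 : ε ≤ 1 := by
      rw [hεdef, div_le_one (by positivity)]
      linarith
    have hεq : ε ≤ √(t - s) := by
      rw [hεdef]
      exact div_le_self hq.le (by linarith)
    obtain ⟨hg, ⟨M, hgM⟩, hgφ, hgX, hgL⟩ := hφε ε ⟨hε0, hε1⟩
    have happ : ∀ t ∈ Set.Icc (0:ℝ) T,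
        |(∫ x, φ x * ρ t x) - ∫ x, φε ε x * ρ t x| ≤ ε := by
      intro t ht
      have i1 : Integrable (fun x => φ x * ρ t x) :=
        (hI t ht).bdd_mul hφc.aestronglyMeasurable (ae_of_all _ hφ1)
      have i2 : Integrable (fun x => φε ε x * ρ t x) :=
        (hI t ht).bdd_mul hg.continuous.aestronglyMeasurable (ae_of_all _ hgM)
      rw [← integral_sub i1 i2]
      have := norm_integral_le_of_norm_le ((hI t ht).const_mul ε)
        (f := fun x => φ x * ρ t x - φε ε x * ρ t x)
        (ae_of_all _ fun x => by
          rw [← sub_mul, norm_mul, Real.norm_eq_abs, Real.norm_eq_abs, abs_of_nonneg (hρ0 t x)]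
          exact mul_le_mul_of_nonneg_right (hgφ x) (hρ0 t x))
      rwa [integral_const_mul, hint t ht, mul_one, Real.norm_eq_abs] at this
    obtain ⟨K, hK, χ, hχ, hχlim⟩ := exists_cutoff hw hXsm hXhom
    obtain ⟨Q, hQ⟩ : ∃ Q, Q = σ * (m * (2 * K + M * K)) + m * (|Mb| * (M * K)) := ⟨_, rfl⟩
    have hl0 : ∀ n : ℕ, 0 < 1 / ((n : ℝ) + 1) := fun n => by positivity
    have hl1 : ∀ n : ℕ, 1 / ((n : ℝ) + 1) ≤ 1 := fun n => by
      rw [div_le_one (by positivity)]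
      linarith [n.cast_nonneg (α := ℝ)]
    have hstep : ∀ n : ℕ,
        |(∫ x, (χ (1 / ((n : ℝ) + 1)) x * φε ε x) * ρ t x)
          - ∫ x, (χ (1 / ((n : ℝ) + 1)) x * φε ε x) * ρ s x|
        ≤ ((σ * (1 / ε) + m * |Mb|) + 1 / ((n : ℝ) + 1) * Q) * (t - s) := by
      intro n
      obtain ⟨c1, c2, c3, c4, c5⟩ := hχ _ (hl0 n) (hl1 n)
      refine time_est hXsm hXdivfree hb hρc hρ0 hρM hρt hρ2 hρt' heq hint
        (ψ := fun x => χ (1 / ((n : ℝ) + 1)) x * φε ε x) (c1.mul hg) c2.mul_right ?_ hs ht hst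
      intro u hu x
      rw [hQ]
      exact psi_bound hXsm hσ (hl0 n).le hK (abs_nonneg Mb) c1 hg c3 c4 c5 hgM hgX hgL (b u x)
        (fun i => (hbM u (Set.Ioo_subset_Icc_self hu) x i).trans (le_abs_self _)) x
    have hlim : ∀ t ∈ Set.Icc (0:ℝ) T,
        Tendsto (fun n : ℕ => ∫ x, (χ (1 / ((n : ℝ) + 1)) x * φε ε x) * ρ t x) atTop
          (𝓝 (∫ x, φε ε x * ρ t x)) := by
      intro t ht
      refine tendsto_integral_of_dominated_convergence (fun x => M * ρ t x) ?_
        ((hI t ht).const_mul M) ?_ ?_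
      · intro n
        exact ((hχ _ (hl0 n) (hl1 n)).1.continuous.mul
          hg.continuous).aestronglyMeasurable.mul (hI t ht).aestronglyMeasurable
      · intro n
        refine ae_of_all _ fun x => ?_
        rw [norm_mul, norm_mul, Real.norm_eq_abs, Real.norm_eq_abs, Real.norm_eq_abs,
          abs_of_nonneg (hρ0 t x)]
        refine mul_le_mul_of_nonneg_right ?_ (hρ0 t x)
        have := mul_le_mul ((hχ _ (hl0 n) (hl1 n)).2.2.1 x) (hgM x) (abs_nonneg _) zero_le_one
        linarith
      · refine ae_of_all _ fun x => ?_
        have h := (hχlim x).comp (tendsto_one_div_add_atTop_nhds_zero_nat (𝕜 := ℝ))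
        have h2 := (h.mul_const (φε ε x)).mul_const (ρ t x)
        rw [one_mul] at h2
        exact h2
    have hbound : |(∫ x, φε ε x * ρ t x) - ∫ x, φε ε x * ρ s x|
        ≤ (σ * (1 / ε) + m * |Mb|) * (t - s) := by
      have hR : Tendsto (fun n : ℕ => ((σ * (1 / ε) + m * |Mb|) + 1 / ((n : ℝ) + 1) * Q) * (t - s))
          atTop (𝓝 (((σ * (1 / ε) + m * |Mb|) + 0 * Q) * (t - s))) :=
        (((tendsto_one_div_add_atTop_nhds_zero_nat (𝕜 := ℝ)).mul_const Q).const_add _).mul_const _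
      rw [zero_mul, add_zero] at hR
      exact le_of_tendsto_of_tendsto' ((hlim t ht).sub (hlim s hs)).abs hR hstep
    have e1 : 1 / ε * (t - s) = (1 + √T) * √(t - s) := by
      rw [hεdef]
      field_simp
      nlinarith
    have e2 : t - s ≤ √T * √(t - s) := by nlinarith
    have e3 : m * |Mb| * (t - s) ≤ m * |Mb| * (√T * √(t - s)) :=
      mul_le_mul_of_nonneg_left e2 (by positivity)
    have e4 : σ * (1 / ε) * (t - s) = σ * ((1 + √T) * √(t - s)) := by rw [mul_assoc, e1]
    have a1 := abs_le.1 (happ t ht)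
    have a2 := abs_le.1 (happ s hs)
    have a3 := abs_le.1 hbound
    rw [abs_le]
    constructor <;> nlinarith
  intro s hs t ht
  rw [← Real.sqrt_eq_rpow]
  rcases lt_trichotomy s t with h | h | h
  · rw [abs_of_pos (sub_pos.2 h)]
    exact hmain s hs t ht h
  · subst h
    simp
  · rw [abs_sub_comm, abs_sub_comm t s, abs_of_pos (sub_pos.2 h)]
    exact hmain t ht s hs h
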